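/- Let r and ℓ be positive integers and let A ⊆ ℤ² be a nonempty set whose points have pairwise Manhattan distance at most r. Let W = {c ∈ ℤ² : there exists a ∈ A with d(c,a) ≤ ℓ} be the set of centres of Lee spheres of radius ℓ that intersect A nontrivially. Then 2·|W| ≤ (r+2ℓ)² + 2(r+2ℓ) + 2. -/

import Mathlib

/-- Manhattan distance on ℤ². -/
def mdist (p q : ℤ × ℤ) : ℤ := |q.1 - p.1| + |q.2 - p.2|

/-!
By the triangle inequality the set of centres is an anticode of diameter `d = r + 2ℓ`. In the
coordinates `(x + y, x - y)` the Manhattan distance becomes the sup distance, so an anticode of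
diameter `d` lies in a box of `(d + 1) × (d + 1)` integer points, of which it only uses those whose
coordinates have an even sum. For finite `I, J ⊆ ℤ`, summing `1 + (-1)^(i + j)` over `I × J` shows
that twice the number of such points is `|I| |J| + (∑_{i ∈ I} (-1)^i) (∑_{j ∈ J} (-1)^j)`, and an
alternating sum over an interval is `-1`, `0` or `1`.
-/

open Finset

theorem mdist_comm (p q : ℤ × ℤ) : mdist p q = mdist q p := by
  simp only [mdist, abs_sub_comm]

theorem mdist_triangle (p q s : ℤ × ℤ) : mdist p s ≤ mdist p q + mdist q s := by
  have h₁ := abs_sub_le s.1 q.1 p.1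
  have h₂ := abs_sub_le s.2 q.2 p.2
  simp only [mdist]
  linarith

/-- The coordinates `(x + y, x - y)` along the two diagonals, which turn the Manhattan distance
into the sup distance. -/
def diagonalCoords (p : ℤ × ℤ) : ℤ × ℤ := (p.1 + p.2, p.1 - p.2)

theorem diagonalCoords_injective : Function.Injective diagonalCoords := by
  intro p q h
  simp only [diagonalCoords, Prod.mk.injEq] at h
  ext <;> lia

theorem even_add_diagonalCoords (p : ℤ × ℤ) :
    Even ((diagonalCoords p).1 + (diagonalCoords p).2) :=
  ⟨p.1, by simp only [diagonalCoords]; ring⟩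

theorem mdist_eq_max_abs_sub_diagonalCoords (p q : ℤ × ℤ) :
    mdist p q = max |(diagonalCoords q).1 - (diagonalCoords p).1|
      |(diagonalCoords q).2 - (diagonalCoords p).2| := by
  simp only [mdist, diagonalCoords]
  grind

theorem exists_forall_mem_Icc_of_forall_sub_le {α β : Type*} [ConditionallyCompleteLattice α]
    [AddCommGroup α] [IsOrderedAddMonoid α] {S : Set β} {f : β → α} {d : α}
    (hS : ∀ p ∈ S, ∀ q ∈ S, f q - f p ≤ d) : ∃ u, ∀ p ∈ S, f p ∈ Set.Icc u (u + d) := by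
  refine ⟨sInf (f '' S), fun q hq => ?_⟩
  have sub_mem_lowerBounds : f q - d ∈ lowerBounds (f '' S) :=
    Set.forall_mem_image.mpr fun p hp => sub_le_comm.mp (hS p hp q hq)
  have mem_image : f q ∈ f '' S := Set.mem_image_of_mem f hq
  exact ⟨csInf_le ⟨_, sub_mem_lowerBounds⟩ mem_image,
    sub_le_iff_le_add.mp (le_csInf ⟨_, mem_image⟩ sub_mem_lowerBounds)⟩

theorem sum_Icc_negOnePow (a b : ℤ) :
    ∑ i ∈ Icc a b, (i.negOnePow : ℤ) =
      a.negOnePow * if Even (b + 1 - a).toNat then 0 else 1 := by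
  rw [Int.Icc_eq_finset_map, sum_map, ← neg_one_geom_sum, mul_sum]
  refine sum_congr rfl fun k _ => ?_
  simp [Int.negOnePow_add, Int.coe_negOnePow_natCast]

theorem abs_sum_Icc_negOnePow_le_one (a b : ℤ) :
    |∑ i ∈ Icc a b, (i.negOnePow : ℤ)| ≤ 1 := by
  rw [sum_Icc_negOnePow, abs_mul, Int.abs_negOnePow]
  split_ifs <;> simp

theorem two_mul_ite_even_eq_one_add_negOnePow (n : ℤ) :
    2 * (if Even n then 1 else 0) = 1 + (n.negOnePow : ℤ) := by
  split_ifs with hn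
  · simp [Int.negOnePow_even n hn]
  · simp [Int.negOnePow_odd n (Int.not_even_iff_odd.mp hn)]

theorem two_mul_card_filter_even_add (I J : Finset ℤ) :
    2 * (#{x ∈ I ×ˢ J | Even (x.1 + x.2)} : ℤ) =
      #I * #J + (∑ i ∈ I, (i.negOnePow : ℤ)) * ∑ j ∈ J, (j.negOnePow : ℤ) := by
  calc 2 * (#{x ∈ I ×ˢ J | Even (x.1 + x.2)} : ℤ)
      = ∑ x ∈ I ×ˢ J, (1 + ((x.1 + x.2).negOnePow : ℤ)) := by
        simp only [card_filter, Nat.cast_sum, Nat.cast_ite, Nat.cast_one, Nat.cast_zero, mul_sum,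
          two_mul_ite_even_eq_one_add_negOnePow]
    _ = #I * #J + (∑ i ∈ I, (i.negOnePow : ℤ)) * ∑ j ∈ J, (j.negOnePow : ℤ) := by
        simp [sum_add_distrib, sum_mul_sum, sum_product, Int.negOnePow_add]

theorem two_mul_card_filter_even_add_Icc_le (u v : ℤ) (m n : ℕ) :
    2 * #{x ∈ Icc u (u + m) ×ˢ Icc v (v + n) | Even (x.1 + x.2)} ≤ (m + 1) * (n + 1) + 1 := by
  have alternating_sums_mul_le_one :
      (∑ i ∈ Icc u (u + m), (i.negOnePow : ℤ)) * ∑ j ∈ Icc v (v + n), (j.negOnePow : ℤ) ≤ 1 := by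
    refine (le_abs_self _).trans ?_
    rw [abs_mul]
    exact mul_le_one₀ (abs_sum_Icc_negOnePow_le_one _ _) (abs_nonneg _)
      (abs_sum_Icc_negOnePow_le_one _ _)
  have card_Icc_add (w : ℤ) (k : ℕ) : #(Icc w (w + k)) = k + 1 := by
    rw [Int.card_Icc]
    lia
  have count := two_mul_card_filter_even_add (Icc u (u + m)) (Icc v (v + n))
  rw [card_Icc_add, card_Icc_add] at count
  zify
  push_cast at count
  linarith

/-- `S` is an anticode of diameter at most `d` for the Manhattan distance on `ℤ²`. The empty set
is an anticode of every diameter, negative ones included. -/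
def IsAnticode (d : ℤ) (S : Set (ℤ × ℤ)) : Prop :=
  ∀ p ∈ S, ∀ q ∈ S, mdist p q ≤ d

namespace IsAnticode

theorem setOf_exists_mdist_le {d : ℤ} {A : Set (ℤ × ℤ)} (hA : IsAnticode d A) (ℓ : ℤ) :
    IsAnticode (d + 2 * ℓ) {c | ∃ a ∈ A, mdist c a ≤ ℓ} := by
  rintro c ⟨a, ha, hca⟩ c' ⟨a', ha', hca'⟩
  calc mdist c c' ≤ mdist c a + mdist a c' := mdist_triangle ..
    _ ≤ mdist c a + (mdist a a' + mdist a' c') := by gcongr; exact mdist_triangle ..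
    _ ≤ ℓ + (d + ℓ) := by gcongr; exacts [hA a ha a' ha', mdist_comm a' c' ▸ hca']
    _ = d + 2 * ℓ := by ring

theorem exists_diagonalCoords_mem_Icc {d : ℤ} {S : Set (ℤ × ℤ)} (hS : IsAnticode d S) :
    ∃ u v : ℤ, ∀ p ∈ S, diagonalCoords p ∈ Icc u (u + d) ×ˢ Icc v (v + d) := by
  have abs_sub_le (p : ℤ × ℤ) (hp : p ∈ S) (q : ℤ × ℤ) (hq : q ∈ S) :
      |(diagonalCoords q).1 - (diagonalCoords p).1| ≤ d ∧
        |(diagonalCoords q).2 - (diagonalCoords p).2| ≤ d :=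
    max_le_iff.mp (mdist_eq_max_abs_sub_diagonalCoords p q ▸ hS p hp q hq)
  obtain ⟨u, fst_mem⟩ := exists_forall_mem_Icc_of_forall_sub_le fun p hp q hq =>
    (le_abs_self _).trans (abs_sub_le p hp q hq).1
  obtain ⟨v, snd_mem⟩ := exists_forall_mem_Icc_of_forall_sub_le fun p hp q hq =>
    (le_abs_self _).trans (abs_sub_le p hp q hq).2
  exact ⟨u, v, fun p hp => mem_product.mpr
    ⟨mem_Icc.mpr (fst_mem p hp), mem_Icc.mpr (snd_mem p hp)⟩⟩

theorem two_mul_encard_le {d : ℕ} {S : Set (ℤ × ℤ)} (hS : IsAnticode d S) :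
    2 * S.encard ≤ (d + 1) * (d + 1) + 1 := by
  obtain ⟨u, v, mem_box⟩ := hS.exists_diagonalCoords_mem_Icc
  let evenBox : Finset (ℤ × ℤ) := {x ∈ Icc u (u + d) ×ˢ Icc v (v + d) | Even (x.1 + x.2)}
  have mapsTo_evenBox : Set.MapsTo diagonalCoords S evenBox := fun p hp =>
    mem_filter.mpr ⟨mem_box p hp, even_add_diagonalCoords p⟩
  have encard_le : S.encard ≤ (evenBox : Set (ℤ × ℤ)).encard :=
    Set.encard_le_encard_of_injOn mapsTo_evenBox diagonalCoords_injective.injOn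
  calc 2 * S.encard ≤ 2 * (evenBox : Set (ℤ × ℤ)).encard := mul_le_mul_right encard_le 2
    _ = (2 * #evenBox : ℕ) := by rw [Set.encard_coe_eq_coe_finsetCard]; norm_cast
    _ ≤ ((d + 1) * (d + 1) + 1 : ℕ) := by
        exact_mod_cast two_mul_card_filter_even_add_Icc_le u v d d
    _ = (d + 1) * (d + 1) + 1 := by norm_cast

end IsAnticode

/-- If `A ⊆ ℤ²` is a nonempty anticode of Manhattan diameter at most `r`, then the number `w`
of Lee spheres of radius `ℓ` intersecting `A` nontrivially satisfies
`2w ≤ (r+2ℓ)² + 2(r+2ℓ) + 2`. -/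
theorem stmt_3 (r ℓ : ℕ) (hr : 0 < r) (hℓ : 0 < ℓ) (A : Set (ℤ × ℤ)) (hA : A.Nonempty)
    (hdiam : ∀ p ∈ A, ∀ q ∈ A, mdist p q ≤ (r : ℤ)) :
    2 * {c : ℤ × ℤ | ∃ a ∈ A, mdist c a ≤ (ℓ : ℤ)}.ncard ≤
      (r + 2 * ℓ) ^ 2 + 2 * (r + 2 * ℓ) + 2 := by
  set W := {c : ℤ × ℤ | ∃ a ∈ A, mdist c a ≤ (ℓ : ℤ)}
  have hW : IsAnticode (r + 2 * ℓ : ℕ) W := by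
    exact_mod_cast IsAnticode.setOf_exists_mdist_le hdiam ℓ
  have hcard : 2 * W.ncard ≤ (r + 2 * ℓ + 1) * (r + 2 * ℓ + 1) + 1 := by
    have ncard_le_encard := mul_le_mul_right W.ncard_le_encard 2
    exact_mod_cast ncard_le_encard.trans hW.two_mul_encard_le
  linarith
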